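/- arXiv:2508.05147 — 2 statements merged into one kernel-verified Lean document; each statement's English description precedes it below -/
import Mathlib

section
/- Let β ≥ 1, R > 0, and let (c_k)_{k∈ℤ^d} be complex numbers with ∑_{k∈ℤ^d} e^{βR|k|_β}|c_k| < ∞. Then the function f(σ) := ∑_{k∈ℤ^d} c_k e^{i k·σ} is a smooth (2π)ℤ^d-periodic function and ‖f‖_{β,R} ≤ ∑_{k∈ℤ^d} e^{βR|k|_β}|c_k|, i.e. the Gevrey norm is bounded by the weighted Fourier norm: ‖f‖_{β,R} ≤ ‖f‖_{𝓕_{β,R}}. -/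
open scoped BigOperators

/-- For `k ∈ ℤ^d` and `β ≥ 1`, the quantity `|k|_β := ∑ i, |k_i|^(1/β)`. -/
noncomputable def znormBeta {d : ℕ} (β : ℝ) (k : Fin d → ℤ) : ℝ :=
  ∑ i, |(k i : ℝ)| ^ (1 / β)

/-- The partial derivative `∂_i f` of a function `f : ℝ^d → ℂ`. -/
noncomputable def gevPDerivC {d : ℕ} (i : Fin d) (f : (Fin d → ℝ) → ℂ) :
    (Fin d → ℝ) → ℂ :=
  fun x => fderiv ℝ f x (Pi.single i 1)

/-- The multi-index partial derivative `∂^k f = ∂_1^{k_1} ⋯ ∂_d^{k_d} f`. -/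
noncomputable def gevMDerivC {d : ℕ} (k : Fin d → ℕ) (f : (Fin d → ℝ) → ℂ) :
    (Fin d → ℝ) → ℂ :=
  (List.finRange d).foldr (fun i g => (gevPDerivC i)^[k i] g) f

/-- The sup-norm `‖f‖_{C⁰} = sup_x ‖f x‖`. -/
noncomputable def supNormC {d : ℕ} (f : (Fin d → ℝ) → ℂ) : ℝ := ⨆ x, ‖f x‖

/-- The `k`-th term `(R^{β|k|₁}/(k!)^β)‖∂^k f‖_{C⁰}` of the Gevrey norm. -/
noncomputable def gevreyTermC {d : ℕ} (β R : ℝ) (f : (Fin d → ℝ) → ℂ)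
    (k : Fin d → ℕ) : ℝ :=
  R ^ (β * ∑ i, (k i : ℝ)) / (∏ i, ((k i).factorial : ℝ)) ^ β * supNormC (gevMDerivC k f)

/-- The Gevrey norm `‖f‖_{β,R} = ∑_{k∈ℕ^d} (R^{β|k|₁}/(k!)^β)‖∂^k f‖_{C⁰}`. -/
noncomputable def gevreyNormC {d : ℕ} (β R : ℝ) (f : (Fin d → ℝ) → ℂ) : ℝ :=
  ∑' k : Fin d → ℕ, gevreyTermC β R f k

/-!
Write `|k_i| = (|k_i| ^ (1 / β)) ^ β`. Since `f` is a superposition of characters `e^{i k·σ}`,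
its `n`-th Gevrey term is at most the sum over `k` of `|c_k|` times the `β`-th power of
`∏ i, (R |k_i| ^ (1 / β)) ^ n_i / n_i!`. Because `β ≥ 1`, a sum of `β`-th powers of nonnegative
numbers is at most the `β`-th power of their sum, so summing over `n` first gives at most
`(∏ i, exp (R |k_i| ^ (1 / β))) ^ β`, which is the Fourier weight `exp (β R |k|_β)`.
-/

open Complex (I)

section Inequalities

theorem sum_rpow_le_rpow_sum {κ : Type*} (s : Finset κ) {f : κ → ℝ} (hf : ∀ m, 0 ≤ f m) {p : ℝ}
    (hp : 1 ≤ p) : ∑ m ∈ s, f m ^ p ≤ (∑ m ∈ s, f m) ^ p := by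
  induction s using Finset.cons_induction with
  | empty => simp [Real.zero_rpow (by linarith : p ≠ 0)]
  | cons a s ha ih =>
    rw [Finset.sum_cons, Finset.sum_cons]
    exact (add_le_add_right ih _).trans
      (Real.add_rpow_le_rpow_add (hf a) (Finset.sum_nonneg fun m _ => hf m) hp)

theorem sum_pow_div_factorial_rpow_le_exp (s : Finset ℕ) {x p : ℝ} (hx : 0 ≤ x) (hp : 1 ≤ p) :
    ∑ m ∈ s, (x ^ m / m.factorial) ^ p ≤ Real.exp (p * x) := by
  have hterm : ∀ m : ℕ, 0 ≤ x ^ m / m.factorial := fun m => by positivity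
  have hsum : HasSum (fun m : ℕ => x ^ m / m.factorial) (Real.exp x) := by
    rw [Real.exp_eq_exp_ℝ]
    exact NormedSpace.expSeries_div_hasSum_exp x
  calc ∑ m ∈ s, (x ^ m / m.factorial) ^ p
      ≤ (∑ m ∈ s, x ^ m / m.factorial) ^ p := sum_rpow_le_rpow_sum s hterm hp
    _ ≤ Real.exp x ^ p :=
        Real.rpow_le_rpow (Finset.sum_nonneg fun m _ => hterm m)
          (sum_le_hasSum s (fun m _ => hterm m) hsum) (by linarith)
    _ = Real.exp (p * x) := by rw [← Real.exp_mul, mul_comm]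

theorem sum_prod_apply_le_prod {ι : Type*} [Fintype ι] {κ : ι → Type*} {f : ∀ i, κ i → ℝ}
    (hf : ∀ i m, 0 ≤ f i m) {b : ι → ℝ} (hb : ∀ i (t : Finset (κ i)), ∑ m ∈ t, f i m ≤ b i)
    (s : Finset (∀ i, κ i)) : ∑ n ∈ s, ∏ i, f i (n i) ≤ ∏ i, b i := by
  classical
  let t (i : ι) : Finset (κ i) := s.image fun n => n i
  have hst : s ⊆ Fintype.piFinset t := fun n hn =>
    Fintype.mem_piFinset.2 fun i => Finset.mem_image_of_mem (fun n => n i) hn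
  calc ∑ n ∈ s, ∏ i, f i (n i)
      ≤ ∑ n ∈ Fintype.piFinset t, ∏ i, f i (n i) :=
        Finset.sum_le_sum_of_subset_of_nonneg hst
          fun n _ _ => Finset.prod_nonneg fun i _ => hf i (n i)
    _ = ∏ i, ∑ m ∈ t i, f i m := (Finset.prod_univ_sum t f).symm
    _ ≤ ∏ i, b i :=
        Finset.prod_le_prod (fun i _ => Finset.sum_nonneg fun m _ => hf i m) fun i _ => hb i (t i)

theorem sum_tsum_le_tsum_of_sum_le {α κ : Type*} {g : κ → α → ℝ} (hg : ∀ n a, 0 ≤ g n a)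
    {b : α → ℝ} (hb : Summable b) (hgb : ∀ a (s : Finset κ), ∑ n ∈ s, g n a ≤ b a)
    (s : Finset κ) : ∑ n ∈ s, ∑' a, g n a ≤ ∑' a, b a := by
  have hsummable : ∀ n, Summable (g n) := fun n =>
    hb.of_nonneg_of_le (hg n) fun a => by simpa using hgb a {n}
  rw [← Summable.tsum_finsetSum fun n _ => hsummable n]
  exact (summable_sum fun n _ => hsummable n).tsum_le_tsum (fun a => hgb a s) hb

end Inequalities

section TrigSeries

variable {α V : Type*} [NormedAddCommGroup V] [NormedSpace ℝ V]

/-- The trigonometric series `∑ a, c a * e^{i L a x}` with coefficients `c` and frequencies `L`.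
The index set and the dual vectors `L a` are arbitrary; Fourier series on the torus are the case of
integer frequencies, see `integerFrequency`. -/
noncomputable def trigSeries (L : α → V →L[ℝ] ℝ) (c : α → ℂ) (x : V) : ℂ :=
  ∑' a, c a * Complex.exp (I * (L a x : ℝ))

/-- Rapid decay of the coefficients `c` relative to the frequencies `L`: all moments
`∑ a, ‖L a‖ ^ m * ‖c a‖` are finite. It makes `trigSeries L c` smooth, with derivatives computed
term by term. -/
def HasRapidDecay (L : α → V →L[ℝ] ℝ) (c : α → ℂ) : Prop :=
  ∀ m : ℕ, Summable fun a => ‖L a‖ ^ m * ‖c a‖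

variable {L : α → V →L[ℝ] ℝ} {c : α → ℂ}

theorem HasRapidDecay.summable_norm (hc : HasRapidDecay L c) : Summable fun a => ‖c a‖ := by
  simpa using hc 0

theorem HasRapidDecay.mul_of_norm_le (hc : HasRapidDecay L c) {b : α → ℂ} {C : ℝ} {m : ℕ}
    (hb : ∀ a, ‖b a‖ ≤ C * ‖L a‖ ^ m) : HasRapidDecay L fun a => b a * c a := by
  intro l
  refine ((hc (l + m)).mul_left C).of_nonneg_of_le (fun a => by positivity) fun a => ?_
  calc ‖L a‖ ^ l * ‖b a * c a‖
      ≤ ‖L a‖ ^ l * (C * ‖L a‖ ^ m * ‖c a‖) := by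
        rw [norm_mul]
        gcongr
        exact hb a
    _ = C * (‖L a‖ ^ (l + m) * ‖c a‖) := by ring

theorem norm_I_mul_apply_le (ℓ : V →L[ℝ] ℝ) (v : V) : ‖I * (ℓ v : ℝ)‖ ≤ ‖v‖ * ‖ℓ‖ := by
  simpa [mul_comm] using ℓ.le_opNorm v

theorem HasRapidDecay.I_mul_apply_pow_mul (hc : HasRapidDecay L c) (v : V) (m : ℕ) :
    HasRapidDecay L fun a => (I * (L a v : ℝ)) ^ m * c a :=
  hc.mul_of_norm_le (C := ‖v‖ ^ m) (m := m) fun a => by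
    rw [norm_pow, ← mul_pow]
    exact pow_le_pow_left₀ (norm_nonneg _) (norm_I_mul_apply_le (L a) v) m

theorem norm_mul_exp_I_mul (z : ℂ) (t : ℝ) : ‖z * Complex.exp (I * t)‖ = ‖z‖ := by
  rw [norm_mul, Complex.norm_exp_I_mul_ofReal, mul_one]

theorem norm_trigSeries_le (L : α → V →L[ℝ] ℝ) (hc : Summable fun a => ‖c a‖) (x : V) :
    ‖trigSeries L c x‖ ≤ ∑' a, ‖c a‖ :=
  tsum_of_norm_bounded hc.hasSum fun a => (norm_mul_exp_I_mul (c a) (L a x)).le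

theorem trigSeries_add_of_mem_zmultiples (L : α → V →L[ℝ] ℝ) (c : α → ℂ) {v : V}
    (hv : ∀ a, L a v ∈ AddSubgroup.zmultiples (2 * Real.pi)) (x : V) :
    trigSeries L c (x + v) = trigSeries L c x := by
  refine tsum_congr fun a => ?_
  obtain ⟨m, hm : m • (2 * Real.pi) = L a v⟩ := hv a
  rw [← Complex.exp_periodic.int_mul m (I * (L a x : ℝ)), map_add, ← hm]
  push_cast
  ring_nf

theorem iteratedDeriv_mul_exp_I_mul (z : ℂ) (n : ℕ) :
    iteratedDeriv n (fun t : ℝ => z * Complex.exp (I * t)) =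
      fun t : ℝ => z * I ^ n * Complex.exp (I * t) := by
  induction n with
  | zero => simp
  | succ n ih =>
    rw [iteratedDeriv_succ, ih]
    funext t
    have hderiv := ((Complex.ofRealCLM.hasDerivAt (x := t)).const_mul I).cexp.const_mul (z * I ^ n)
    refine hderiv.deriv.trans ?_
    simp only [Complex.ofRealCLM_apply, Complex.ofReal_one]
    ring

theorem contDiff_mul_exp_I_mul (z : ℂ) {n : WithTop ℕ∞} :
    ContDiff ℝ n fun t : ℝ => z * Complex.exp (I * t) :=
  contDiff_const.mul (contDiff_const.mul Complex.ofRealCLM.contDiff).cexp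

theorem norm_iteratedFDeriv_mul_exp_I_mul_apply_le (z : ℂ) (ℓ : V →L[ℝ] ℝ) (n : ℕ) (x : V) :
    ‖iteratedFDeriv ℝ n (fun y => z * Complex.exp (I * (ℓ y : ℝ))) x‖ ≤ ‖ℓ‖ ^ n * ‖z‖ := by
  let wave (t : ℝ) : ℂ := z * Complex.exp (I * t)
  have hwave : ‖iteratedFDeriv ℝ n wave (ℓ x)‖ = ‖z‖ := by
    rw [norm_iteratedFDeriv_eq_norm_iteratedDeriv, iteratedDeriv_mul_exp_I_mul,
      norm_mul_exp_I_mul, norm_mul, norm_pow, Complex.norm_I, one_pow, mul_one]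
  calc ‖iteratedFDeriv ℝ n (wave ∘ ℓ) x‖
      = ‖(iteratedFDeriv ℝ n wave (ℓ x)).compContinuousLinearMap fun _ => ℓ‖ := by
        rw [ℓ.iteratedFDeriv_comp_right (contDiff_mul_exp_I_mul z) x le_rfl]
    _ ≤ ‖iteratedFDeriv ℝ n wave (ℓ x)‖ * ∏ _i : Fin n, ‖ℓ‖ :=
        ContinuousMultilinearMap.norm_compContinuousLinearMap_le _ _
    _ = ‖ℓ‖ ^ n * ‖z‖ := by rw [hwave, Fin.prod_const, mul_comm]

theorem contDiff_trigSeries (hc : HasRapidDecay L c) : ContDiff ℝ (⊤ : ℕ∞) (trigSeries L c) :=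
  contDiff_tsum (fun a => (contDiff_mul_exp_I_mul (c a)).comp (L a).contDiff) (fun m _ => hc m)
    fun m a x _ => norm_iteratedFDeriv_mul_exp_I_mul_apply_le (c a) (L a) m x

theorem hasFDerivAt_mul_exp_I_mul_apply (z : ℂ) (ℓ : V →L[ℝ] ℝ) (x : V) :
    HasFDerivAt (fun y => z * Complex.exp (I * (ℓ y : ℝ)))
      ((z * Complex.exp (I * (ℓ x : ℝ)) * I) • Complex.ofRealCLM.comp ℓ) x := by
  have hphase : HasFDerivAt (fun y => ((ℓ y : ℝ) : ℂ)) (Complex.ofRealCLM.comp ℓ) x :=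
    (Complex.ofRealCLM.comp ℓ).hasFDerivAt
  refine ((hphase.const_mul I).cexp.const_mul z).congr_fderiv ?_
  rw [smul_smul, smul_smul, mul_assoc]

theorem norm_smul_ofRealCLM_comp_le (z : ℂ) (ℓ : V →L[ℝ] ℝ) :
    ‖z • Complex.ofRealCLM.comp ℓ‖ ≤ ‖ℓ‖ * ‖z‖ := by
  rw [norm_smul, mul_comm]
  gcongr
  simpa using Complex.ofRealCLM.opNorm_comp_le ℓ

theorem fderiv_trigSeries_apply (hc : HasRapidDecay L c) (x v : V) :
    fderiv ℝ (trigSeries L c) x v = trigSeries L (fun a => I * (L a v : ℝ) * c a) x := by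
  let termDeriv (a : α) (y : V) : V →L[ℝ] ℂ :=
    (c a * Complex.exp (I * (L a y : ℝ)) * I) • Complex.ofRealCLM.comp (L a)
  have hbound : ∀ a y, ‖termDeriv a y‖ ≤ ‖L a‖ ^ 1 * ‖c a‖ := fun a y => by
    refine (norm_smul_ofRealCLM_comp_le _ _).trans_eq ?_
    rw [norm_mul, norm_mul_exp_I_mul, Complex.norm_I, mul_one, pow_one]
  have hsummable : Summable fun a => c a * Complex.exp (I * (L a x : ℝ)) :=
    .of_norm <| hc.summable_norm.congr fun a => (norm_mul_exp_I_mul (c a) (L a x)).symm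
  have hderiv : HasFDerivAt (trigSeries L c) (∑' a, termDeriv a x) x :=
    hasFDerivAt_tsum (hc 1) (fun a => hasFDerivAt_mul_exp_I_mul_apply (c a) (L a)) hbound
      hsummable x
  have hsummable_deriv : Summable fun a => termDeriv a x :=
    .of_norm_bounded (hc 1) fun a => hbound a x
  rw [hderiv.fderiv, ← ContinuousLinearMap.apply_apply (𝕜 := ℝ) v,
    ContinuousLinearMap.map_tsum _ hsummable_deriv]
  refine tsum_congr fun a => ?_
  simp only [termDeriv, ContinuousLinearMap.apply_apply, smul_apply,
    ContinuousLinearMap.comp_apply, Complex.ofRealCLM_apply, smul_eq_mul]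
  ring

end TrigSeries

section PartialDerivatives

variable {α : Type*} {d : ℕ} {L : α → (Fin d → ℝ) →L[ℝ] ℝ} {c : α → ℂ}

theorem gevPDerivC_iterate_trigSeries (hc : HasRapidDecay L c) (i : Fin d) (m : ℕ) :
    (gevPDerivC i)^[m] (trigSeries L c) =
      trigSeries L fun a => (I * (L a (Pi.single i 1) : ℝ)) ^ m * c a := by
  induction m generalizing c with
  | zero => simp
  | succ m ih =>
    have hstep : gevPDerivC i (trigSeries L c) =
        trigSeries L fun a => I * (L a (Pi.single i 1) : ℝ) * c a :=
      funext fun x => fderiv_trigSeries_apply hc x _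
    have hdecay : HasRapidDecay L fun a => I * (L a (Pi.single i 1) : ℝ) * c a := by
      simpa only [pow_one] using hc.I_mul_apply_pow_mul (Pi.single i 1) 1
    rw [Function.iterate_succ_apply, hstep, ih hdecay]
    simp only [pow_succ, mul_assoc]

theorem gevMDerivC_trigSeries (hc : HasRapidDecay L c) (n : Fin d → ℕ) :
    gevMDerivC n (trigSeries L c) =
      trigSeries L fun a => (∏ i, (I * (L a (Pi.single i 1) : ℝ)) ^ n i) * c a := by
  have hfoldr : ∀ l : List (Fin d),
      l.foldr (fun i g => (gevPDerivC i)^[n i] g) (trigSeries L c) =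
        trigSeries L fun a =>
          (l.map fun i => (I * (L a (Pi.single i 1) : ℝ)) ^ n i).prod * c a := by
    intro l
    induction l using List.reverseRecOn generalizing c with
    | nil => simp
    | append_singleton l i ih =>
      -- Peeling off the innermost derivative keeps the list acting on a rapidly decaying series.
      rw [List.foldr_append, List.foldr_cons, List.foldr_nil, gevPDerivC_iterate_trigSeries hc,
        ih (hc.I_mul_apply_pow_mul _ _)]
      simp only [List.map_append, List.map_cons, List.map_nil, List.prod_append,
        List.prod_singleton, mul_assoc]
  simpa only [gevMDerivC, Fin.prod_univ_def] using hfoldr (List.finRange d)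

theorem supNormC_gevMDerivC_trigSeries_le (hc : HasRapidDecay L c) (n : Fin d → ℕ) :
    supNormC (gevMDerivC n (trigSeries L c)) ≤
      ∑' a, (∏ i, |L a (Pi.single i 1)| ^ n i) * ‖c a‖ := by
  let b (a : α) : ℂ := ∏ i, (I * (L a (Pi.single i 1) : ℝ)) ^ n i
  have norm_b : ∀ a, ‖b a‖ = ∏ i, |L a (Pi.single i 1)| ^ n i := fun a => by simp [b]
  have hb : ∀ a, ‖b a‖ ≤ 1 * ‖L a‖ ^ ∑ i, n i := fun a => by
    rw [norm_b, one_mul, ← Finset.prod_pow_eq_pow_sum]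
    gcongr with i
    simpa [Pi.norm_single] using (L a).le_opNorm (Pi.single i 1)
  refine ciSup_le fun x => ?_
  rw [gevMDerivC_trigSeries hc]
  simpa only [norm_mul, norm_b] using
    norm_trigSeries_le L (hc.mul_of_norm_le hb).summable_norm x

end PartialDerivatives

section GevreyWeight

/-- The factor `R^{β|n|₁} / (n!)^β` multiplying `‖∂^n f‖_{C⁰}` in the Gevrey norm. -/
noncomputable def gevreyWeight {ι : Type*} [Fintype ι] (β R : ℝ) (n : ι → ℕ) : ℝ :=
  R ^ (β * ∑ i, (n i : ℝ)) / (∏ i, ((n i).factorial : ℝ)) ^ β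

variable {ι : Type*} [Fintype ι] {β R : ℝ}

theorem gevreyWeight_nonneg (hR : 0 ≤ R) (n : ι → ℕ) : 0 ≤ gevreyWeight β R n := by
  unfold gevreyWeight
  positivity

theorem gevreyWeight_mul_prod_pow (hβ : 0 < β) (hR : 0 ≤ R) {x : ι → ℝ} (hx : ∀ i, 0 ≤ x i)
    (n : ι → ℕ) :
    gevreyWeight β R n * ∏ i, x i ^ n i =
      ∏ i, ((R * x i ^ (1 / β)) ^ n i / (n i).factorial) ^ β := by
  have hRpow : R ^ (β * ∑ i, (n i : ℝ)) = ∏ i, (R ^ n i) ^ β := by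
    rw [Real.finsetProd_rpow _ _ fun i _ => by positivity, Finset.prod_pow_eq_pow_sum,
      ← Real.rpow_natCast, ← Real.rpow_mul hR, Nat.cast_sum, mul_comm]
  have hxpow : ∀ i, x i ^ n i = ((x i ^ (1 / β)) ^ n i) ^ β := fun i => by
    rw [← Real.rpow_pow_comm (Real.rpow_nonneg (hx i) _), one_div, Real.rpow_inv_rpow (hx i) hβ.ne']
  have hfact : (∏ i, ((n i).factorial : ℝ)) ^ β = ∏ i, ((n i).factorial : ℝ) ^ β :=
    (Real.finsetProd_rpow _ _ (fun i _ => by positivity) _).symm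
  rw [gevreyWeight, hRpow, hfact, ← Finset.prod_div_distrib, ← Finset.prod_mul_distrib]
  refine Finset.prod_congr rfl fun i _ => ?_
  have hroot : 0 ≤ x i ^ (1 / β) := Real.rpow_nonneg (hx i) _
  rw [hxpow i, mul_pow, Real.div_rpow (by positivity) (by positivity),
    Real.mul_rpow (by positivity) (by positivity), mul_div_right_comm]

theorem sum_gevreyWeight_mul_prod_pow_le_exp (hβ : 1 ≤ β) (hR : 0 ≤ R) {x : ι → ℝ}
    (hx : ∀ i, 0 ≤ x i) (s : Finset (ι → ℕ)) :
    ∑ n ∈ s, gevreyWeight β R n * ∏ i, x i ^ n i ≤ Real.exp (β * R * ∑ i, x i ^ (1 / β)) := by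
  have hroot : ∀ i, 0 ≤ R * x i ^ (1 / β) := fun i => mul_nonneg hR (Real.rpow_nonneg (hx i) _)
  calc ∑ n ∈ s, gevreyWeight β R n * ∏ i, x i ^ n i
      = ∑ n ∈ s, ∏ i, ((R * x i ^ (1 / β)) ^ n i / (n i).factorial) ^ β :=
        Finset.sum_congr rfl fun n _ => gevreyWeight_mul_prod_pow (by linarith) hR hx n
    _ ≤ ∏ i, Real.exp (β * (R * x i ^ (1 / β))) :=
        sum_prod_apply_le_prod (f := fun i m => ((R * x i ^ (1 / β)) ^ m / m.factorial) ^ β)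
          (fun i m =>
            Real.rpow_nonneg (div_nonneg (pow_nonneg (hroot i) m) m.factorial.cast_nonneg) β)
          (fun i t => sum_pow_div_factorial_rpow_le_exp t (hroot i) hβ) s
    _ = Real.exp (β * R * ∑ i, x i ^ (1 / β)) := by
        simp only [← Real.exp_sum, Finset.mul_sum, mul_assoc]

end GevreyWeight

section IntegerFrequencies

/-- The dual vector `σ ↦ k·σ` of the Fourier mode `e^{i k·σ}`. -/
noncomputable def integerFrequency {ι : Type*} [Fintype ι] (k : ι → ℤ) : (ι → ℝ) →L[ℝ] ℝ :=
  ∑ i, (k i : ℝ) • ContinuousLinearMap.proj i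

section

variable {ι : Type*} [Fintype ι]

theorem integerFrequency_apply (k : ι → ℤ) (σ : ι → ℝ) :
    integerFrequency k σ = ∑ i, (k i : ℝ) * σ i := by
  simp [integerFrequency]

theorem integerFrequency_apply_single [DecidableEq ι] (k : ι → ℤ) (i : ι) :
    integerFrequency k (Pi.single i 1) = k i := by
  simp [integerFrequency_apply, Pi.single_apply]

theorem norm_integerFrequency_le (k : ι → ℤ) : ‖integerFrequency k‖ ≤ ∑ i, |(k i : ℝ)| := by
  refine (integerFrequency k).opNorm_le_bound (by positivity) fun σ => ?_
  rw [integerFrequency_apply, Finset.sum_mul]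
  refine (norm_sum_le _ _).trans (Finset.sum_le_sum fun i _ => ?_)
  rw [norm_mul, Real.norm_eq_abs]
  gcongr
  exact norm_le_pi_norm σ i

theorem trigSeries_integerFrequency_add_two_pi_mul (c : (ι → ℤ) → ℂ) (x : ι → ℝ) (m : ι → ℤ) :
    trigSeries integerFrequency c (fun i => x i + 2 * Real.pi * m i) =
      trigSeries integerFrequency c x := by
  refine trigSeries_add_of_mem_zmultiples _ c (v := fun i => 2 * Real.pi * m i) (fun k => ?_) x
  refine ⟨∑ i, k i * m i, ?_⟩
  simp only [integerFrequency_apply, zsmul_eq_mul, Int.cast_sum, Int.cast_mul, Finset.sum_mul]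
  exact Finset.sum_congr rfl fun i _ => by ring

end

variable {d : ℕ} {β R : ℝ}

theorem norm_integerFrequency_le_znormBeta_rpow (hβ : 1 ≤ β) (k : Fin d → ℤ) :
    ‖integerFrequency k‖ ≤ znormBeta β k ^ β := by
  calc ‖integerFrequency k‖ ≤ ∑ i, |(k i : ℝ)| := norm_integerFrequency_le k
    _ = ∑ i, (|(k i : ℝ)| ^ (1 / β)) ^ β := by
        simp only [one_div, Real.rpow_inv_rpow (abs_nonneg _) (by linarith : β ≠ 0)]
    _ ≤ znormBeta β k ^ β := sum_rpow_le_rpow_sum _ (fun i => by positivity) hβ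

theorem norm_integerFrequency_pow_le_exp (hβ : 1 ≤ β) (hR : 0 < R) (k : Fin d → ℤ) (m : ℕ) :
    ‖integerFrequency k‖ ^ m ≤
      (m.factorial / R ^ m) ^ β * Real.exp (β * R * znormBeta β k) := by
  have hz : 0 ≤ znormBeta β k := Finset.sum_nonneg fun i _ => by positivity
  have hpow : znormBeta β k ^ m ≤ m.factorial / R ^ m * Real.exp (R * znormBeta β k) := by
    have hexp := Real.pow_div_factorial_le_exp _ (mul_nonneg hR.le hz) m
    rw [mul_pow, div_le_iff₀ (by positivity)] at hexp
    rw [div_mul_eq_mul_div, le_div_iff₀ (by positivity)]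
    linarith
  calc ‖integerFrequency k‖ ^ m
      ≤ (znormBeta β k ^ β) ^ m := by
        gcongr
        exact norm_integerFrequency_le_znormBeta_rpow hβ k
    _ = (znormBeta β k ^ m) ^ β := Real.rpow_pow_comm hz β m
    _ ≤ (m.factorial / R ^ m * Real.exp (R * znormBeta β k)) ^ β := by gcongr
    _ = (m.factorial / R ^ m) ^ β * Real.exp (β * R * znormBeta β k) := by
        rw [Real.mul_rpow (by positivity) (Real.exp_nonneg _), ← Real.exp_mul]
        ring_nf

theorem hasRapidDecay_integerFrequency (hβ : 1 ≤ β) (hR : 0 < R) {c : (Fin d → ℤ) → ℂ}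
    (hc : Summable fun k => Real.exp (β * R * znormBeta β k) * ‖c k‖) :
    HasRapidDecay integerFrequency c := by
  intro m
  refine (hc.mul_left ((m.factorial / R ^ m) ^ β)).of_nonneg_of_le (fun k => by positivity)
    fun k => ?_
  rw [← mul_assoc]
  gcongr
  exact norm_integerFrequency_pow_le_exp hβ hR k m

theorem gevreyTermC_nonneg (hR : 0 ≤ R) (f : (Fin d → ℝ) → ℂ) (n : Fin d → ℕ) :
    0 ≤ gevreyTermC β R f n :=
  mul_nonneg (gevreyWeight_nonneg hR n) (Real.iSup_nonneg fun _ => norm_nonneg _)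

theorem gevreyTermC_trigSeries_le (hR : 0 ≤ R) {c : (Fin d → ℤ) → ℂ}
    (hc : HasRapidDecay integerFrequency c) (n : Fin d → ℕ) :
    gevreyTermC β R (trigSeries integerFrequency c) n ≤
      ∑' k : Fin d → ℤ, gevreyWeight β R n * (∏ i, |(k i : ℝ)| ^ n i) * ‖c k‖ := by
  simp only [mul_assoc, tsum_mul_left]
  refine mul_le_mul_of_nonneg_left ?_ (gevreyWeight_nonneg hR n)
  simpa only [integerFrequency_apply_single] using supNormC_gevMDerivC_trigSeries_le hc n

theorem sum_gevreyTermC_trigSeries_le (hβ : 1 ≤ β) (hR : 0 < R) {c : (Fin d → ℤ) → ℂ}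
    (hc : Summable fun k => Real.exp (β * R * znormBeta β k) * ‖c k‖) (s : Finset (Fin d → ℕ)) :
    ∑ n ∈ s, gevreyTermC β R (trigSeries integerFrequency c) n ≤
      ∑' k, Real.exp (β * R * znormBeta β k) * ‖c k‖ := by
  let g (n : Fin d → ℕ) (k : Fin d → ℤ) : ℝ :=
    gevreyWeight β R n * (∏ i, |(k i : ℝ)| ^ n i) * ‖c k‖
  have hg : ∀ n k, 0 ≤ g n k := fun n k =>
    mul_nonneg (mul_nonneg (gevreyWeight_nonneg hR.le n) (by positivity)) (norm_nonneg _)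
  have hg_sum : ∀ k (s : Finset (Fin d → ℕ)),
      ∑ n ∈ s, g n k ≤ Real.exp (β * R * znormBeta β k) * ‖c k‖ := fun k s => by
    rw [← Finset.sum_mul]
    gcongr
    exact sum_gevreyWeight_mul_prod_pow_le_exp hβ hR.le (fun i => abs_nonneg (k i : ℝ)) s
  calc ∑ n ∈ s, gevreyTermC β R (trigSeries integerFrequency c) n
      ≤ ∑ n ∈ s, ∑' k, g n k := Finset.sum_le_sum fun n _ =>
        gevreyTermC_trigSeries_le hR.le (hasRapidDecay_integerFrequency hβ hR hc) n
    _ ≤ _ := sum_tsum_le_tsum_of_sum_le hg hc hg_sum s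

end IntegerFrequencies

/-- A function with weighted-summable Fourier coefficients is smooth, periodic,
and its Gevrey norm is bounded by the weighted Fourier norm:
`‖f‖_{β,R} ≤ ‖f‖_{𝓕_{β,R}}`. -/
theorem gevrey_norm_le_fourier_norm (d : ℕ) (hd : 1 ≤ d) (β R : ℝ)
    (hβ : 1 ≤ β) (hR : 0 < R) (c : (Fin d → ℤ) → ℂ)
    (hc : Summable fun k => Real.exp (β * R * znormBeta β k) * ‖c k‖)
    (f : (Fin d → ℝ) → ℂ)
    (hf : ∀ σ : Fin d → ℝ, f σ = ∑' k : Fin d → ℤ,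
      c k * Complex.exp (Complex.I * ((∑ i, (k i : ℝ) * σ i : ℝ) : ℂ))) :
    ContDiff ℝ (⊤ : ℕ∞) f ∧
    (∀ (x : Fin d → ℝ) (m : Fin d → ℤ),
      f (fun i => x i + 2 * Real.pi * m i) = f x) ∧
    Summable (gevreyTermC β R f) ∧
    gevreyNormC β R f ≤ ∑' k : Fin d → ℤ, Real.exp (β * R * znormBeta β k) * ‖c k‖ := by
  obtain rfl : f = trigSeries integerFrequency c :=
    funext fun σ => by simp only [hf, trigSeries, integerFrequency_apply]
  have hnonneg : 0 ≤ gevreyTermC β R (trigSeries integerFrequency c) :=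
    gevreyTermC_nonneg hR.le _
  have hsum := sum_gevreyTermC_trigSeries_le hβ hR hc
  exact ⟨contDiff_trigSeries (hasRapidDecay_integerFrequency hβ hR hc),
    trigSeries_integerFrequency_add_two_pi_mul c,
    summable_of_sum_le hnonneg hsum, Real.tsum_le_of_sum_le hnonneg hsum⟩
end

section
/- (Composition lemma of Marco–Sauzin, as stated in the paper.) Let β ≥ 1, R, R₁ > 0. Let Y : ℝ^N → ℝ be smooth and (2π)ℤ^N-periodic with ‖Y‖_{β,R} < ∞, and let u = (u_1, …, u_N), where each u_i : ℝ^d → ℝ is smooth and (2π)ℤ^d-periodic with ‖u_i‖_{β,R₁} < ∞. Assume that for every i = 1, …, N one has ‖u_i‖_{β,R₁} − ‖u_i‖_{C⁰} ≤ R^β / d^{β−1}. Then the composition Y∘u, defined by (Y∘u)(x) := Y(u_1(x), …, u_N(x)), is a smooth (2π)ℤ^d-periodic function and ‖Y∘u‖_{β,R₁} ≤ ‖Y‖_{β,R}. -/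
open scoped BigOperators

/-- The partial derivative `∂_i f` of a function `f : ℝ^d → ℝ`. -/
noncomputable def gevPDeriv {d : ℕ} (i : Fin d) (f : (Fin d → ℝ) → ℝ) :
    (Fin d → ℝ) → ℝ :=
  fun x => fderiv ℝ f x (Pi.single i 1)

/-- The multi-index partial derivative `∂^k f = ∂_1^{k_1} ⋯ ∂_d^{k_d} f`. -/
noncomputable def gevMDeriv {d : ℕ} (k : Fin d → ℕ) (f : (Fin d → ℝ) → ℝ) :
    (Fin d → ℝ) → ℝ :=
  (List.finRange d).foldr (fun i g => (gevPDeriv i)^[k i] g) f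

/-- The sup-norm `‖f‖_{C⁰} = sup_x |f x|`. -/
noncomputable def supNorm {d : ℕ} (f : (Fin d → ℝ) → ℝ) : ℝ := ⨆ x, |f x|

/-- The `k`-th term `(R^{β|k|₁}/(k!)^β)‖∂^k f‖_{C⁰}` of the Gevrey norm. -/
noncomputable def gevreyTerm {d : ℕ} (β R : ℝ) (f : (Fin d → ℝ) → ℝ)
    (k : Fin d → ℕ) : ℝ :=
  R ^ (β * ∑ i, (k i : ℝ)) / (∏ i, ((k i).factorial : ℝ)) ^ β * supNorm (gevMDeriv k f)

/-- The Gevrey norm `‖f‖_{β,R} = ∑_{k∈ℕ^d} (R^{β|k|₁}/(k!)^β)‖∂^k f‖_{C⁰}`. -/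
noncomputable def gevreyNorm {d : ℕ} (β R : ℝ) (f : (Fin d → ℝ) → ℝ) : ℝ :=
  ∑' k : Fin d → ℕ, gevreyTerm β R f k

/-- `f : ℝ^d → ℝ` is `(2π)ℤ^d`-periodic. -/
def Periodic2pi {d : ℕ} (f : (Fin d → ℝ) → ℝ) : Prop :=
  ∀ (x : Fin d → ℝ) (m : Fin d → ℤ), f (fun i => x i + 2 * Real.pi * m i) = f x

/-!
A formal power series is determined by its constant term and its partial derivatives, so Taylor
expansion turns composition of functions into substitution of power series: the Taylor series of
`Y ∘ u` at `x` arises from that of `Y` at `u x` by substituting the increments `u_i(x + X) -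
u_i(x)`. For `M` nonzero multi-indices `l_p ∈ ℕ^d` one has `M! ∏ l_p! ≤ d^M (∑ l_p)!`. Raised to
the power `β - 1`, this makes the Gevrey weights submultiplicative on the resulting products, at
the cost of a factor `d^{β-1}` for every `u_i`. Hence the Gevrey terms of `Y ∘ u` are dominated by
the coefficients of `∑_m ‖∂^m Y‖ / m!^β ∏ (d^{β-1} A_i)^{m_i}`, where `A_i` is the series of the
nonconstant Gevrey terms of `u_i`. Summing all coefficients replaces `A_i` by
`‖u_i‖_{β,R₁} - ‖u_i‖_{C⁰} ≤ R^β / d^{β-1}`, and `‖Y‖_{β,R}` remains.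
-/

namespace Gevrey

open Finset
open scoped Nat

section PartialDerivatives

variable {d N : ℕ} {f g : (Fin d → ℝ) → ℝ}

lemma contDiff_gevPDeriv (hf : ContDiff ℝ (⊤ : ℕ∞) f) (i : Fin d) :
    ContDiff ℝ (⊤ : ℕ∞) (gevPDeriv i f) :=
  (hf.fderiv_right (m := (⊤ : ℕ∞)) (by simp)).clm_apply contDiff_const

lemma gevPDeriv_comm (hf : ContDiff ℝ 2 f) (i j : Fin d) :
    gevPDeriv i (gevPDeriv j f) = gevPDeriv j (gevPDeriv i f) := by
  have hdiff : Differentiable ℝ (fderiv ℝ f) :=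
    (hf.fderiv_right (m := 1) (by norm_num)).differentiable (by simp)
  have second_deriv (x : Fin d → ℝ) (a b : Fin d) : gevPDeriv a (gevPDeriv b f) x =
      fderiv ℝ (fderiv ℝ f) x (Pi.single a 1) (Pi.single b 1) := by
    unfold gevPDeriv
    rw [fderiv_clm_apply (hdiff x) (differentiableAt_const _)]
    simp
  funext x
  rw [second_deriv, second_deriv]
  exact hf.contDiffAt.isSymmSndFDerivAt (by simp) _ _

lemma gevPDeriv_add (hf : Differentiable ℝ f) (hg : Differentiable ℝ g) (i : Fin d) :
    gevPDeriv i (f + g) = gevPDeriv i f + gevPDeriv i g := by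
  funext x
  simp [gevPDeriv, fderiv_add (hf x) (hg x)]

lemma gevPDeriv_mul (hf : Differentiable ℝ f) (hg : Differentiable ℝ g) (i : Fin d) :
    gevPDeriv i (f * g) = gevPDeriv i f * g + f * gevPDeriv i g := by
  funext x
  simp only [gevPDeriv, fderiv_mul (hf x) (hg x), Pi.add_apply, Pi.mul_apply,
    add_apply, smul_apply, smul_eq_mul]
  ring

lemma gevPDeriv_comp {Y : (Fin N → ℝ) → ℝ} (hY : Differentiable ℝ Y)
    {u : Fin N → (Fin d → ℝ) → ℝ} (hu : ∀ j, Differentiable ℝ (u j)) (i : Fin d) :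
    gevPDeriv i (fun x => Y (fun j => u j x)) =
      ∑ j, (fun x => gevPDeriv j Y (fun k => u k x)) * gevPDeriv i (u j) := by
  funext x
  have hcomp : HasFDerivAt (fun x => Y (fun j => u j x)) _ x :=
    (hY _).hasFDerivAt.comp x (hasFDerivAt_pi.2 fun j => (hu j x).hasFDerivAt)
  simp only [gevPDeriv, Finset.sum_apply, Pi.mul_apply, hcomp.fderiv]
  conv_lhs => rw [ContinuousLinearMap.comp_apply, pi_eq_sum_univ' (ContinuousLinearMap.pi _ _)]
  simp [mul_comm]

lemma contDiff_iterate_gevPDeriv (hf : ContDiff ℝ (⊤ : ℕ∞) f) (i : Fin d) (n : ℕ) :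
    ContDiff ℝ (⊤ : ℕ∞) ((gevPDeriv i)^[n] f) := by
  induction n with
  | zero => exact hf
  | succ n ih => rw [Function.iterate_succ_apply']; exact contDiff_gevPDeriv ih i

lemma gevPDeriv_iterate_comm (hf : ContDiff ℝ (⊤ : ℕ∞) f) (i j : Fin d) (n : ℕ) :
    gevPDeriv j ((gevPDeriv i)^[n] f) = (gevPDeriv i)^[n] (gevPDeriv j f) := by
  induction n with
  | zero => rfl
  | succ n ih =>
    rw [Function.iterate_succ_apply', Function.iterate_succ_apply', ← ih,
      gevPDeriv_comm ((contDiff_iterate_gevPDeriv hf i n).of_le (WithTop.coe_le_coe.2 le_top))]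

/-- The mixed partial derivative `∏_{i ∈ l} ∂_i^{k_i} f` in the coordinates listed in `l`; taking
`l = List.finRange d` gives `gevMDeriv k f`. Arbitrary `l` is what makes induction possible. -/
noncomputable def listDeriv (l : List (Fin d)) (k : Fin d → ℕ) (f : (Fin d → ℝ) → ℝ) :
    (Fin d → ℝ) → ℝ :=
  l.foldr (fun i g => (gevPDeriv i)^[k i] g) f

lemma contDiff_listDeriv (hf : ContDiff ℝ (⊤ : ℕ∞) f) (l : List (Fin d)) (k : Fin d → ℕ) :
    ContDiff ℝ (⊤ : ℕ∞) (listDeriv l k f) := by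
  induction l with
  | nil => exact hf
  | cons a l ih => exact contDiff_iterate_gevPDeriv ih a (k a)

lemma gevPDeriv_listDeriv (hf : ContDiff ℝ (⊤ : ℕ∞) f) (l : List (Fin d)) (k : Fin d → ℕ)
    (j : Fin d) : gevPDeriv j (listDeriv l k f) = listDeriv l k (gevPDeriv j f) := by
  induction l with
  | nil => rfl
  | cons a l ih =>
    change gevPDeriv j ((gevPDeriv a)^[k a] (listDeriv l k f)) =
      (gevPDeriv a)^[k a] (listDeriv l k (gevPDeriv j f))
    rw [gevPDeriv_iterate_comm (contDiff_listDeriv hf l k), ih]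

lemma listDeriv_congr {l : List (Fin d)} {k k' : Fin d → ℕ} (h : ∀ i ∈ l, k i = k' i)
    (f : (Fin d → ℝ) → ℝ) : listDeriv l k f = listDeriv l k' f :=
  List.foldr_ext _ _ _ fun i hi _ => by rw [h i hi]

lemma listDeriv_add_single (hf : ContDiff ℝ (⊤ : ℕ∞) f) {l : List (Fin d)} (hl : l.Nodup)
    (k : Fin d → ℕ) {j : Fin d} (hj : j ∈ l) :
    listDeriv l (k + Pi.single j 1) f = listDeriv l k (gevPDeriv j f) := by
  induction l with
  | nil => simp at hj
  | cons a l ih =>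
    rw [List.nodup_cons] at hl
    change (gevPDeriv a)^[(k + Pi.single j 1 : Fin d → ℕ) a] (listDeriv l (k + Pi.single j 1) f) =
      (gevPDeriv a)^[k a] (listDeriv l k (gevPDeriv j f))
    rcases eq_or_ne a j with rfl | haj
    · have hcongr : ∀ i ∈ l, (k + Pi.single a 1 : Fin d → ℕ) i = k i := fun i hi => by
        simp [ne_of_mem_of_not_mem hi hl.1]
      rw [listDeriv_congr hcongr, ← gevPDeriv_listDeriv hf]
      simp
    · rw [ih hl.2 ((List.mem_cons.1 hj).resolve_left haj.symm)]
      simp [haj]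

lemma contDiff_gevMDeriv (hf : ContDiff ℝ (⊤ : ℕ∞) f) (k : Fin d → ℕ) :
    ContDiff ℝ (⊤ : ℕ∞) (gevMDeriv k f) :=
  contDiff_listDeriv hf _ k

lemma gevMDeriv_add_single (hf : ContDiff ℝ (⊤ : ℕ∞) f) (k : Fin d → ℕ) (j : Fin d) :
    gevMDeriv (k + Pi.single j 1) f = gevMDeriv k (gevPDeriv j f) :=
  listDeriv_add_single hf (List.nodup_finRange d) k (List.mem_finRange j)

lemma gevMDeriv_zero (f : (Fin d → ℝ) → ℝ) : gevMDeriv 0 f = f :=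
  List.foldr_fixed' (fun _ => rfl) _

end PartialDerivatives

section Periodicity

variable {d N : ℕ} {f : (Fin d → ℝ) → ℝ}

lemma periodic2pi_gevPDeriv (hf : Periodic2pi f) (i : Fin d) : Periodic2pi (gevPDeriv i f) := by
  intro x m
  have htranslate : (fun y => f (y + fun i => 2 * Real.pi * m i)) = f := funext fun y => hf y m
  have hderiv := fderiv_comp_add_right (𝕜 := ℝ) (f := f) (x := x) (fun i => 2 * Real.pi * m i)
  rw [htranslate] at hderiv
  exact DFunLike.congr_fun hderiv.symm (Pi.single i 1)

lemma periodic2pi_gevMDeriv (hf : Periodic2pi f) (k : Fin d → ℕ) :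
    Periodic2pi (gevMDeriv k f) := by
  unfold gevMDeriv
  induction List.finRange d with
  | nil => exact hf
  | cons a l ih =>
    exact Function.Iterate.rec Periodic2pi ih (fun _ hg => periodic2pi_gevPDeriv hg a) _

lemma periodic2pi_comp (Y : (Fin N → ℝ) → ℝ) {u : Fin N → (Fin d → ℝ) → ℝ}
    (hu : ∀ i, Periodic2pi (u i)) : Periodic2pi fun x => Y (fun i => u i x) :=
  fun x m => congrArg Y (funext fun i => hu i x m)

lemma bddAbove_range_abs_of_periodic2pi (hf : Periodic2pi f) (hcont : Continuous f) :
    BddAbove (Set.range fun x => |f x|) := by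
  have hbdd : BddAbove ((fun x => |f x|) '' Set.Icc 0 (fun _ => 2 * Real.pi)) :=
    isCompact_Icc.bddAbove_image (by fun_prop)
  refine hbdd.mono ?_
  rintro _ ⟨x, rfl⟩
  refine ⟨fun i => toIcoMod Real.two_pi_pos 0 (x i),
    ⟨fun i => left_le_toIcoMod .., fun i => ?_⟩, ?_⟩
  · simpa using (toIcoMod_lt_right Real.two_pi_pos 0 (x i)).le
  · have hx := hf x fun i => -toIcoDiv Real.two_pi_pos 0 (x i)
    simp only [← self_sub_toIcoDiv_zsmul, zsmul_eq_mul, ← hx]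
    congr! 3
    push_cast
    ring

end Periodicity

section FormalTaylorSeries

variable {d N : ℕ}

lemma add_one_le_order_of_le_order_pderiv {σ : Type*} {G : MvPowerSeries σ ℝ} {M : ℕ}
    (h0 : G.constantCoeff = 0) (hpderiv : ∀ i, M ≤ (MvPowerSeries.pderiv ℝ i G).order) :
    (M + 1 : ℕ) ≤ G.order := by
  refine MvPowerSeries.nat_le_order fun n hn => ?_
  rcases eq_or_ne n 0 with rfl | hne
  · simpa using h0
  obtain ⟨i, hi⟩ := Finsupp.ne_iff.1 hne
  obtain ⟨k, rfl⟩ : ∃ k, n = k + Finsupp.single i 1 :=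
    ⟨n - Finsupp.single i 1,
      (tsub_add_cancel_of_le (Finsupp.single_le_iff.2 (Nat.one_le_iff_ne_zero.2 hi))).symm⟩
  have hk : (k.degree : ℕ∞) < M := by
    rw [map_add, Finsupp.degree_single] at hn
    exact_mod_cast Nat.lt_of_succ_lt_succ hn
  have hcoeff := MvPowerSeries.coeff_of_lt_order (hk.trans_le (hpderiv i))
  rw [MvPowerSeries.coeff_pderiv] at hcoeff
  exact (mul_eq_zero.1 hcoeff).resolve_right (by positivity)

lemma derivation_aeval {ι R A : Type*} [Fintype ι] [CommSemiring R] [CommSemiring A] [Algebra R A]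
    (D : Derivation R A A) (F : ι → A) (p : MvPolynomial ι R) :
    D (MvPolynomial.aeval F p) =
      ∑ j, MvPolynomial.aeval F (MvPolynomial.pderiv j p) * D (F j) := by
  classical
  induction p using MvPolynomial.induction_on with
  | C a => simp
  | add p q hp hq => simp [hp, hq, add_mul, Finset.sum_add_distrib]
  | mul_X p k hp =>
    simp only [map_mul, MvPolynomial.aeval_X, Derivation.leibniz, smul_eq_mul, hp, map_add,
      add_mul, Finset.sum_add_distrib, Finset.mul_sum, MvPolynomial.pderiv_X]
    congr 1
    · simp [Pi.single_apply, apply_ite (MvPolynomial.aeval F)]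
    · exact Finset.sum_congr rfl fun j _ => by ring

lemma pderiv_truncTotal_add_one {σ R : Type*} [Finite σ] [CommSemiring R] (M : ℕ)
    (Q : MvPowerSeries σ R) (j : σ) :
    MvPolynomial.pderiv j (MvPowerSeries.truncTotal (M + 1) Q) =
      MvPowerSeries.truncTotal M (MvPowerSeries.pderiv R j Q) := by
  ext m
  simp [MvPolynomial.coeff_pderiv, MvPowerSeries.coeff_truncTotal_eq_ite,
    MvPowerSeries.coeff_pderiv]

/-- The formal Taylor series of `f` at `x`, i.e. `∑ₙ ∂ⁿf(x)/n! Xⁿ`. -/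
noncomputable def taylorSeries (x : Fin d → ℝ) (f : (Fin d → ℝ) → ℝ) : MvPowerSeries (Fin d) ℝ :=
  fun n => gevMDeriv n f x / ∏ i, ((n i)! : ℝ)

/-- The formal Taylor series of `f - f x` at `x`; it can be substituted into a power series. -/
noncomputable def taylorIncrement (x : Fin d → ℝ) (f : (Fin d → ℝ) → ℝ) :
    MvPowerSeries (Fin d) ℝ :=
  taylorSeries x f - MvPowerSeries.C (f x)

variable {f g : (Fin d → ℝ) → ℝ} (x : Fin d → ℝ)

lemma coeff_taylorSeries (f : (Fin d → ℝ) → ℝ) (n : Fin d →₀ ℕ) :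
    (taylorSeries x f).coeff n = gevMDeriv n f x / ∏ i, ((n i)! : ℝ) := rfl

lemma constantCoeff_taylorSeries (f : (Fin d → ℝ) → ℝ) :
    (taylorSeries x f).constantCoeff = f x := by
  simp [← MvPowerSeries.coeff_zero_eq_constantCoeff_apply, coeff_taylorSeries, gevMDeriv_zero]

lemma constantCoeff_taylorIncrement (f : (Fin d → ℝ) → ℝ) :
    (taylorIncrement x f).constantCoeff = 0 := by
  simp [taylorIncrement, constantCoeff_taylorSeries]

lemma coeff_taylorIncrement (f : (Fin d → ℝ) → ℝ) {n : Fin d →₀ ℕ} (hn : n ≠ 0) :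
    (taylorIncrement x f).coeff n = gevMDeriv n f x / ∏ i, ((n i)! : ℝ) := by
  classical
  simp [taylorIncrement, coeff_taylorSeries, MvPowerSeries.coeff_C, hn]

lemma pderiv_taylorSeries (hf : ContDiff ℝ (⊤ : ℕ∞) f) (i : Fin d) :
    MvPowerSeries.pderiv ℝ i (taylorSeries x f) = taylorSeries x (gevPDeriv i f) := by
  ext n
  have hfactorial : ∏ j, (((n + Finsupp.single i 1 : Fin d →₀ ℕ) j)! : ℝ) =
      (n i + 1) * ∏ j, ((n j)! : ℝ) := by
    rw [← Finset.mul_prod_erase _ _ (mem_univ i), ← Finset.mul_prod_erase _ _ (mem_univ i),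
      ← mul_assoc]
    congr 1
    · simp [Nat.factorial_succ]
    · exact Finset.prod_congr rfl fun j hj => by simp [Finset.ne_of_mem_erase hj]
  rw [MvPowerSeries.coeff_pderiv, coeff_taylorSeries, coeff_taylorSeries, hfactorial,
    Finsupp.coe_add, Finsupp.single_eq_pi_single, gevMDeriv_add_single hf]
  field_simp

lemma pderiv_taylorIncrement (hf : ContDiff ℝ (⊤ : ℕ∞) f) (i : Fin d) :
    MvPowerSeries.pderiv ℝ i (taylorIncrement x f) = taylorSeries x (gevPDeriv i f) := by
  simp [taylorIncrement, pderiv_taylorSeries x hf]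

lemma taylorSeries_add (hf : ContDiff ℝ (⊤ : ℕ∞) f) (hg : ContDiff ℝ (⊤ : ℕ∞) g) :
    taylorSeries x (f + g) = taylorSeries x f + taylorSeries x g := by
  suffices h : ∀ M : ℕ, M ≤ (taylorSeries x (f + g) - (taylorSeries x f + taylorSeries x g)).order
    from sub_eq_zero.1 (MvPowerSeries.order_eq_top_iff.1 (ENat.eq_top_iff_forall_ge.2 h))
  intro M
  induction M generalizing f g with
  | zero => simp
  | succ M ih =>
    refine add_one_le_order_of_le_order_pderiv (by simp [constantCoeff_taylorSeries]) fun i => ?_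
    have hfg : ContDiff ℝ (⊤ : ℕ∞) (f + g) := hf.add hg
    convert ih (contDiff_gevPDeriv hf i) (contDiff_gevPDeriv hg i) using 2
    simp [pderiv_taylorSeries x hf, pderiv_taylorSeries x hg, pderiv_taylorSeries x hfg,
      gevPDeriv_add (hf.differentiable (by simp)) (hg.differentiable (by simp))]

lemma taylorSeries_mul (hf : ContDiff ℝ (⊤ : ℕ∞) f) (hg : ContDiff ℝ (⊤ : ℕ∞) g) :
    taylorSeries x (f * g) = taylorSeries x f * taylorSeries x g := by
  suffices h : ∀ M : ℕ, M ≤ (taylorSeries x (f * g) - taylorSeries x f * taylorSeries x g).order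
    from sub_eq_zero.1 (MvPowerSeries.order_eq_top_iff.1 (ENat.eq_top_iff_forall_ge.2 h))
  intro M
  induction M generalizing f g with
  | zero => simp
  | succ M ih =>
    refine add_one_le_order_of_le_order_pderiv (by simp [constantCoeff_taylorSeries]) fun i => ?_
    have hf' := contDiff_gevPDeriv hf i
    have hg' := contDiff_gevPDeriv hg i
    have hfg : ContDiff ℝ (⊤ : ℕ∞) (f * g) := hf.mul hg
    have hf'g : ContDiff ℝ (⊤ : ℕ∞) (gevPDeriv i f * g) := hf'.mul hg
    have hfg' : ContDiff ℝ (⊤ : ℕ∞) (f * gevPDeriv i g) := hf.mul hg'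
    have hleibniz : MvPowerSeries.pderiv ℝ i
        (taylorSeries x (f * g) - taylorSeries x f * taylorSeries x g) =
          taylorSeries x (gevPDeriv i f * g) - taylorSeries x (gevPDeriv i f) * taylorSeries x g +
            (taylorSeries x (f * gevPDeriv i g) -
              taylorSeries x f * taylorSeries x (gevPDeriv i g)) := by
      simp only [map_sub, Derivation.leibniz, smul_eq_mul, pderiv_taylorSeries x hf,
        pderiv_taylorSeries x hg, pderiv_taylorSeries x hfg,
        gevPDeriv_mul (hf.differentiable (by simp)) (hg.differentiable (by simp)),
        taylorSeries_add x hf'g hfg']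
      ring
    rw [hleibniz]
    exact (le_min (ih hf' hg) (ih hf hg')).trans MvPowerSeries.min_order_le_add

lemma taylorSeries_sum {ι : Type*} (s : Finset ι) {f : ι → (Fin d → ℝ) → ℝ}
    (hf : ∀ j, ContDiff ℝ (⊤ : ℕ∞) (f j)) :
    taylorSeries x (∑ j ∈ s, f j) = ∑ j ∈ s, taylorSeries x (f j) := by
  classical
  induction s using Finset.induction_on with
  | empty =>
    have hzero := taylorSeries_add x (f := 0) (g := 0) contDiff_zero_fun contDiff_zero_fun
    simpa using hzero
  | insert j s hj ih =>
    have hsum : ContDiff ℝ (⊤ : ℕ∞) (∑ j ∈ s, f j) := by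
      simpa only [Finset.sum_fn] using ContDiff.sum fun j _ => hf j
    rw [Finset.sum_insert hj, Finset.sum_insert hj, taylorSeries_add x (hf j) hsum, ih]

variable {u : Fin N → (Fin d → ℝ) → ℝ}

lemma pderiv_taylorSeries_comp {Y : (Fin N → ℝ) → ℝ} (hY : ContDiff ℝ (⊤ : ℕ∞) Y)
    (hu : ∀ j, ContDiff ℝ (⊤ : ℕ∞) (u j)) (i : Fin d) :
    MvPowerSeries.pderiv ℝ i (taylorSeries x fun y => Y fun j => u j y) =
      ∑ j, taylorSeries x (fun y => gevPDeriv j Y fun k => u k y) *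
        taylorSeries x (gevPDeriv i (u j)) := by
  have contDiff_comp {Z : (Fin N → ℝ) → ℝ} (hZ : ContDiff ℝ (⊤ : ℕ∞) Z) :
      ContDiff ℝ (⊤ : ℕ∞) fun y => Z fun j => u j y := hZ.comp (contDiff_pi.2 hu)
  have hY' j := contDiff_comp (contDiff_gevPDeriv hY j)
  have hu' j := contDiff_gevPDeriv (hu j) i
  have hprod j : ContDiff ℝ (⊤ : ℕ∞)
      ((fun y => gevPDeriv j Y fun k => u k y) * gevPDeriv i (u j)) := (hY' j).mul (hu' j)
  rw [pderiv_taylorSeries x (contDiff_comp hY), gevPDeriv_comp (hY.differentiable (by simp))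
    fun j => (hu j).differentiable (by simp), taylorSeries_sum x _ hprod]
  exact Finset.sum_congr rfl fun j _ => taylorSeries_mul x (hY' j) (hu' j)

lemma le_order_taylorSeries_comp_sub (hu : ∀ j, ContDiff ℝ (⊤ : ℕ∞) (u j)) (M : ℕ)
    {Y : (Fin N → ℝ) → ℝ} (hY : ContDiff ℝ (⊤ : ℕ∞) Y) :
    M ≤ (taylorSeries x (fun y => Y (fun j => u j y)) -
      MvPolynomial.aeval (fun j => taylorIncrement x (u j))
        (MvPowerSeries.truncTotal M (taylorSeries (fun j => u j x) Y))).order := by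
  induction M generalizing Y with
  | zero => simp
  | succ M ih =>
    refine add_one_le_order_of_le_order_pderiv ?_ fun i => ?_
    · have hconst (p : MvPolynomial (Fin N) ℝ) : MvPowerSeries.constantCoeff
          (MvPolynomial.aeval (fun j => taylorIncrement x (u j)) p) = p.constantCoeff := by
        induction p using MvPolynomial.induction_on with
        | C a => simp [MvPowerSeries.algebraMap_apply]
        | add p q hp hq => simp [hp, hq]
        | mul_X p j hp => simp [hp, constantCoeff_taylorIncrement]
      rw [map_sub, hconst, MvPowerSeries.constantCoeff_truncTotal_eq_ite]
      simp [constantCoeff_taylorSeries]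
    rw [map_sub, pderiv_taylorSeries_comp x hY hu, derivation_aeval, ← Finset.sum_sub_distrib]
    refine Finset.sum_induction _ (fun F : MvPowerSeries (Fin d) ℝ => M ≤ F.order)
      (fun F G hF hG => (le_min hF hG).trans MvPowerSeries.min_order_le_add) (by simp)
      fun j _ => ?_
    rw [pderiv_truncTotal_add_one, pderiv_taylorSeries _ hY, pderiv_taylorIncrement x (hu j),
      ← sub_mul]
    exact (ih (contDiff_gevPDeriv hY j)).trans (le_self_add.trans MvPowerSeries.le_order_mul)

/-- Faà di Bruno's formula. -/
lemma coeff_taylorSeries_comp {Y : (Fin N → ℝ) → ℝ} (hY : ContDiff ℝ (⊤ : ℕ∞) Y)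
    (hu : ∀ j, ContDiff ℝ (⊤ : ℕ∞) (u j)) {M : ℕ} {n : Fin d →₀ ℕ} (hn : n.degree < M) :
    (taylorSeries x (fun y => Y (fun j => u j y))).coeff n =
      ∑ m ∈ (Finsupp.finite_of_degree_lt M).toFinset,
        (taylorSeries (fun j => u j x) Y).coeff m *
          (∏ j, taylorIncrement x (u j) ^ m j).coeff n := by
  have hn' : (n.degree : ℕ∞) < M := mod_cast hn
  have hcoeff := MvPowerSeries.coeff_of_lt_order
    (hn'.trans_le (le_order_taylorSeries_comp_sub x hu M hY))
  rw [map_sub, sub_eq_zero] at hcoeff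
  rw [hcoeff, MvPowerSeries.truncTotal, MvPowerSeries.truncFinset_apply, map_sum, map_sum]
  refine Finset.sum_congr rfl fun m _ => ?_
  rw [MvPolynomial.aeval_monomial, Finsupp.prod_fintype _ _ (by simp),
    ← Algebra.smul_def, map_smul, smul_eq_mul]

end FormalTaylorSeries

section Factorials

lemma factorial_succ_mul_factorial_le {a : ℕ} (ha : a ≠ 0) (n : ℕ) :
    (n + 1)! * a ! ≤ (n + a)! := by
  have hchoose : n + 1 ≤ (n + a).choose n := by
    simpa using Nat.choose_le_choose n (show n + 1 ≤ n + a by lia)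
  calc (n + 1)! * a ! = (n + 1) * (n ! * a !) := by rw [Nat.factorial_succ, mul_assoc]
    _ ≤ (n + a).choose n * (n ! * a !) := Nat.mul_le_mul_right _ hchoose
    _ = (n + a)! := by
      rw [← mul_assoc, Nat.choose_symm_add, Nat.add_choose_mul_factorial_mul_factorial]

lemma factorial_card_mul_prod_factorial_le {ι : Type*} {s : Finset ι} {a : ι → ℕ}
    (ha : ∀ p ∈ s, a p ≠ 0) : (#s)! * ∏ p ∈ s, (a p)! ≤ (∑ p ∈ s, a p)! := by
  classical
  induction s using Finset.induction_on with
  | empty => simp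
  | insert b s hb ih =>
    rw [Finset.forall_mem_insert] at ha
    have hcard : #s ≤ ∑ p ∈ s, a p := by
      simpa using Finset.card_nsmul_le_sum s a 1 fun p hp => Nat.one_le_iff_ne_zero.2 (ha.2 p hp)
    rw [Finset.prod_insert hb, Finset.sum_insert hb, Finset.card_insert_of_notMem hb,
      add_comm (a b)]
    calc (#s + 1)! * ((a b)! * ∏ p ∈ s, (a p)!)
        = (#s + 1) * ((#s)! * ∏ p ∈ s, (a p)!) * (a b)! := by rw [Nat.factorial_succ]; ring
      _ ≤ (∑ p ∈ s, a p + 1) * (∑ p ∈ s, a p)! * (a b)! := by gcongr; exact ih ha.2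
      _ ≤ (∑ p ∈ s, a p + a b)! := factorial_succ_mul_factorial_le ha.1 _

lemma factorial_card_mul_prod_factorial_le_of_subset {ι : Type*} {s t : Finset ι} (hst : s ⊆ t)
    {a : ι → ℕ} (ha : ∀ p ∈ s, a p ≠ 0) : (#s)! * ∏ p ∈ t, (a p)! ≤ (∑ p ∈ t, a p)! := by
  classical
  rw [← Finset.prod_sdiff hst, ← Finset.sum_sdiff hst]
  calc (#s)! * ((∏ p ∈ t \ s, (a p)!) * ∏ p ∈ s, (a p)!)
      = (∏ p ∈ t \ s, (a p)!) * ((#s)! * ∏ p ∈ s, (a p)!) := by ring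
    _ ≤ (∑ p ∈ t \ s, a p)! * (∑ p ∈ s, a p)! := by
      gcongr
      · exact Nat.le_of_dvd (Nat.factorial_pos _) (Nat.prod_factorial_dvd_factorial_sum _ _)
      · exact factorial_card_mul_prod_factorial_le ha
    _ ≤ (∑ p ∈ t \ s, a p + ∑ p ∈ s, a p)! :=
      Nat.le_of_dvd (Nat.factorial_pos _) (Nat.factorial_mul_factorial_dvd_factorial_add _ _)

lemma factorial_sum_le_card_pow_mul_prod_factorial {ι : Type*} (s : Finset ι) (r : ι → ℕ) :
    (∑ i ∈ s, r i)! ≤ #s ^ (∑ i ∈ s, r i) * ∏ i ∈ s, (r i)! := by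
  classical
  have hmultinomial : Nat.multinomial s r ≤ #s ^ (∑ i ∈ s, r i) := by
    have hpow := Finset.sum_pow_eq_sum_piAntidiag s (fun _ => 1) (∑ i ∈ s, r i)
    simp only [Finset.sum_const, smul_eq_mul, mul_one, one_pow, Finset.prod_const_one,
      Nat.cast_id] at hpow
    rw [hpow,
      ← Nat.multinomial_congr (f := fun i => if i ∈ s then r i else 0) fun i hi => by simp [hi]]
    refine Finset.single_le_sum (f := Nat.multinomial s) (fun _ _ => Nat.zero_le _) ?_
    simp +contextual [Finset.mem_piAntidiag]
  rw [← Nat.multinomial_spec s r, mul_comm]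
  exact Nat.mul_le_mul_right _ hmultinomial

/- Choose a coordinate `c p` with `l p (c p) ≠ 0` and group the indices `p` by their value `c p`:
`l` contributes a factor `(#c⁻¹{i})!` in the coordinate `i`. -/
lemma factorial_card_mul_prod_prod_factorial_le {ι σ : Type*} [Fintype ι] [Fintype σ]
    {l : ι → σ →₀ ℕ} (hl : ∀ p, l p ≠ 0) :
    (Fintype.card ι)! * ∏ p, ∏ i, (l p i)! ≤
      Fintype.card σ ^ Fintype.card ι * ∏ i, ((∑ p, l p) i)! := by
  classical
  choose c hc using fun p => Finsupp.ne_iff.1 (hl p)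
  have hcard : ∑ i, #{p | c p = i} = Fintype.card ι :=
    (Finset.card_eq_sum_card_fiberwise fun _ _ => Finset.mem_univ _).symm
  have hfibers : (Fintype.card ι)! ≤
      Fintype.card σ ^ Fintype.card ι * ∏ i, (#{p | c p = i})! := by
    simpa only [hcard, Finset.card_univ] using
      factorial_sum_le_card_pow_mul_prod_factorial (univ : Finset σ) fun i => #{p | c p = i}
  calc (Fintype.card ι)! * ∏ p, ∏ i, (l p i)!
      ≤ Fintype.card σ ^ Fintype.card ι * (∏ i, (#{p | c p = i})!) * ∏ p, ∏ i, (l p i)! :=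
        Nat.mul_le_mul_right _ hfibers
    _ = Fintype.card σ ^ Fintype.card ι * ∏ i, ((#{p | c p = i})! * ∏ p, (l p i)!) := by
      rw [Finset.prod_comm, Finset.prod_mul_distrib, mul_assoc]
    _ ≤ Fintype.card σ ^ Fintype.card ι * ∏ i, ((∑ p, l p) i)! := by
      gcongr with i
      rw [Finsupp.finsetSum_apply]
      refine factorial_card_mul_prod_factorial_le_of_subset (Finset.filter_subset _ _)
        fun p hp => ?_
      rw [← (Finset.mem_filter.1 hp).2]
      exact hc p

end Factorials

section Weight

variable {σ ι : Type*} [Fintype σ]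

/-- The weight `ρ^|k| / k!^(β - 1)` of the multi-index `k`. With `ρ = R^β` it turns the Taylor
coefficient `‖∂ᵏf‖/k!` into the term of index `k` of the Gevrey norm `‖f‖_{β,R}`. -/
noncomputable def gevreyWeight (β ρ : ℝ) (k : σ →₀ ℕ) : ℝ :=
  ρ ^ k.degree / (∏ i, ((k i)! : ℝ)) ^ (β - 1)

lemma gevreyWeight_nonneg (β : ℝ) {ρ : ℝ} (hρ : 0 ≤ ρ) (k : σ →₀ ℕ) : 0 ≤ gevreyWeight β ρ k := by
  unfold gevreyWeight
  positivity

lemma gevreyWeight_mul_pow (β ρ a : ℝ) (k : σ →₀ ℕ) :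
    gevreyWeight β ρ k * a ^ k.degree = gevreyWeight β (ρ * a) k := by
  rw [gevreyWeight, gevreyWeight, mul_pow, div_mul_eq_mul_div]

lemma gevreyWeight_sum_le [Fintype ι] {β ρ : ℝ} (hβ : 1 ≤ β) (hρ : 0 ≤ ρ) {l : ι → σ →₀ ℕ}
    (hl : ∀ p, l p ≠ 0) :
    ((Fintype.card ι)! : ℝ) ^ (β - 1) * gevreyWeight β ρ (∑ p, l p) ≤
      ((Fintype.card σ : ℝ) ^ (β - 1)) ^ Fintype.card ι * ∏ p, gevreyWeight β ρ (l p) := by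
  have hfactorial : ((Fintype.card ι)! : ℝ) ^ (β - 1) * (∏ p, ∏ i, ((l p i)! : ℝ)) ^ (β - 1) ≤
      ((Fintype.card σ : ℝ) ^ (β - 1)) ^ Fintype.card ι *
        (∏ i, (((∑ p, l p) i)! : ℝ)) ^ (β - 1) := by
    rw [← Real.mul_rpow (by positivity) (by positivity), Real.rpow_pow_comm (by positivity),
      ← Real.mul_rpow (by positivity) (by positivity)]
    refine Real.rpow_le_rpow (by positivity) ?_ (sub_nonneg.2 hβ)
    exact_mod_cast factorial_card_mul_prod_prod_factorial_le hl
  have hprod : ∏ p, gevreyWeight β ρ (l p) =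
      ρ ^ (∑ p, l p).degree / (∏ p, ∏ i, ((l p i)! : ℝ)) ^ (β - 1) := by
    simp only [gevreyWeight, Finset.prod_div_distrib, Finset.prod_pow_eq_pow_sum, map_sum]
    rw [Real.finsetProd_rpow _ _ fun p _ => Finset.prod_nonneg fun i _ => Nat.cast_nonneg _]
  rw [hprod, gevreyWeight, mul_div_left_comm, mul_div_left_comm (_ ^ Fintype.card ι)]
  refine mul_le_mul_of_nonneg_left ?_ (pow_nonneg hρ _)
  rwa [div_le_div_iff₀ (by positivity) (by positivity)]

end Weight

section Majorants

variable {σ ι : Type*}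

lemma prod_pow_eq_prod_sigma [Fintype ι] {α : Type*} [CommMonoid α] (a : ι → α) (m : ι →₀ ℕ) :
    ∏ i, a i ^ m i = ∏ p : Σ i, Fin (m i), a p.1 := by
  simp [Fintype.prod_sigma]

lemma card_sigma_fin_eq_degree [Fintype ι] (m : ι →₀ ℕ) :
    Fintype.card (Σ i, Fin (m i)) = m.degree := by
  simp [Finsupp.degree_eq_sum]

lemma coeff_prod_nonneg {s : Finset ι} {G : ι → MvPowerSeries σ ℝ}
    (hG : ∀ p ∈ s, ∀ k, 0 ≤ (G p).coeff k) (n : σ →₀ ℕ) : 0 ≤ (∏ p ∈ s, G p).coeff n := by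
  classical
  rw [MvPowerSeries.coeff_prod]
  exact Finset.sum_nonneg fun l _ => Finset.prod_nonneg fun p hp => hG p hp _

lemma gevreyWeight_mul_abs_coeff_prod_le [Fintype ι] [Fintype σ] {β ρ : ℝ} (hβ : 1 ≤ β)
    (hρ : 0 ≤ ρ) {F G : ι → MvPowerSeries σ ℝ} (hF : ∀ p, (F p).constantCoeff = 0)
    (hFG : ∀ p k, gevreyWeight β ρ k * |(F p).coeff k| ≤ (G p).coeff k) (n : σ →₀ ℕ) :
    ((Fintype.card ι)! : ℝ) ^ (β - 1) * (gevreyWeight β ρ n * |(∏ p, F p).coeff n|) ≤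
      ((Fintype.card σ : ℝ) ^ (β - 1)) ^ Fintype.card ι * (∏ p, G p).coeff n := by
  classical
  have hG p k : 0 ≤ (G p).coeff k :=
    (mul_nonneg (gevreyWeight_nonneg β hρ k) (abs_nonneg _)).trans (hFG p k)
  rw [MvPowerSeries.coeff_prod, MvPowerSeries.coeff_prod, ← mul_assoc]
  refine (mul_le_mul_of_nonneg_left (Finset.abs_sum_le_sum_abs _ _)
    (mul_nonneg (by positivity) (gevreyWeight_nonneg β hρ n))).trans ?_
  rw [Finset.mul_sum, Finset.mul_sum]
  refine Finset.sum_le_sum fun l hl => ?_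
  obtain ⟨rfl, -⟩ := Finset.mem_finsuppAntidiag.1 hl
  rw [Finset.abs_prod]
  by_cases hne : ∀ p, l p ≠ 0
  · calc _ ≤ ((Fintype.card σ : ℝ) ^ (β - 1)) ^ Fintype.card ι *
          (∏ p, gevreyWeight β ρ (l p)) * ∏ p, |(F p).coeff (l p)| :=
        mul_le_mul_of_nonneg_right (gevreyWeight_sum_le hβ hρ hne) (by positivity)
      _ = ((Fintype.card σ : ℝ) ^ (β - 1)) ^ Fintype.card ι *
          ∏ p, gevreyWeight β ρ (l p) * |(F p).coeff (l p)| := by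
        rw [Finset.prod_mul_distrib, mul_assoc]
      _ ≤ _ := by
        gcongr with p
        · exact fun p _ => mul_nonneg (gevreyWeight_nonneg β hρ _) (abs_nonneg _)
        · exact hFG p _
  · push Not at hne
    obtain ⟨p, hp⟩ := hne
    rw [Finset.prod_eq_zero (mem_univ p) (by simp [hp, hF]), mul_zero]
    exact mul_nonneg (by positivity) (Finset.prod_nonneg fun p _ => hG p _)

lemma gevreyWeight_mul_abs_coeff_prod_pow_le [Fintype ι] [Fintype σ] {β ρ : ℝ} (hβ : 1 ≤ β)
    (hρ : 0 ≤ ρ) {F G : ι → MvPowerSeries σ ℝ} (hF : ∀ i, (F i).constantCoeff = 0)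
    (hFG : ∀ i k, gevreyWeight β ρ k * |(F i).coeff k| ≤ (G i).coeff k)
    (m : ι →₀ ℕ) (n : σ →₀ ℕ) :
    gevreyWeight β ρ n * |(∏ i, F i ^ m i).coeff n| ≤
      gevreyWeight β ((Fintype.card σ : ℝ) ^ (β - 1)) m * (∏ i, G i ^ m i).coeff n := by
  have hprod := gevreyWeight_mul_abs_coeff_prod_le (ι := Σ i, Fin (m i)) hβ hρ
    (fun p => hF p.1) (fun p => hFG p.1) n
  rw [card_sigma_fin_eq_degree, ← prod_pow_eq_prod_sigma, ← prod_pow_eq_prod_sigma] at hprod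
  have hfactorial : (∏ i, ((m i)! : ℝ)) ≤ (m.degree ! : ℝ) := by
    rw [Finsupp.degree_eq_sum]
    exact_mod_cast Nat.le_of_dvd (Nat.factorial_pos _) (Nat.prod_factorial_dvd_factorial_sum _ _)
  rw [gevreyWeight.eq_def β _ m, div_mul_eq_mul_div, le_div_iff₀' (by positivity)]
  refine le_trans ?_ hprod
  have := gevreyWeight_nonneg β hρ n
  gcongr

variable [DecidableEq σ]

lemma sum_Iic_coeff_mul_le {F G : MvPowerSeries σ ℝ} (hF : ∀ k, 0 ≤ F.coeff k)
    (hG : ∀ k, 0 ≤ G.coeff k) (K : σ →₀ ℕ) :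
    ∑ n ∈ Iic K, (F * G).coeff n ≤ (∑ n ∈ Iic K, F.coeff n) * ∑ n ∈ Iic K, G.coeff n := by
  have hfiber {n : σ →₀ ℕ} (hn : n ∈ Iic K) :
      antidiagonal n = {q ∈ Iic K ×ˢ Iic K | q.1 + q.2 = n} := by
    ext q
    simp only [Finset.HasAntidiagonal.mem_antidiagonal, mem_filter, mem_product, mem_Iic,
      iff_and_self] at hn ⊢
    rintro rfl
    exact ⟨le_self_add.trans hn, le_add_self.trans hn⟩
  calc ∑ n ∈ Iic K, (F * G).coeff n
      = ∑ n ∈ Iic K, ∑ q ∈ Iic K ×ˢ Iic K with q.1 + q.2 = n, F.coeff q.1 * G.coeff q.2 :=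
        Finset.sum_congr rfl fun n hn => by rw [MvPowerSeries.coeff_mul, hfiber hn]
    _ ≤ ∑ q ∈ Iic K ×ˢ Iic K, F.coeff q.1 * G.coeff q.2 :=
        Finset.sum_fiberwise_le_sum_of_sum_fiber_nonneg fun n _ =>
          Finset.sum_nonneg fun q _ => mul_nonneg (hF _) (hG _)
    _ = (∑ n ∈ Iic K, F.coeff n) * ∑ n ∈ Iic K, G.coeff n := by
        rw [Finset.sum_mul_sum, Finset.sum_product]

lemma sum_Iic_coeff_prod_le {s : Finset ι} {G : ι → MvPowerSeries σ ℝ}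
    (hG : ∀ p ∈ s, ∀ k, 0 ≤ (G p).coeff k) (K : σ →₀ ℕ) :
    ∑ n ∈ Iic K, (∏ p ∈ s, G p).coeff n ≤ ∏ p ∈ s, ∑ n ∈ Iic K, (G p).coeff n := by
  classical
  induction s using Finset.induction_on with
  | empty => simp [MvPowerSeries.coeff_one]
  | insert b s hb ih =>
    rw [Finset.forall_mem_insert] at hG
    rw [Finset.prod_insert hb, Finset.prod_insert hb]
    exact (sum_Iic_coeff_mul_le hG.1 (coeff_prod_nonneg hG.2) K).trans
      (mul_le_mul_of_nonneg_left (ih hG.2) (Finset.sum_nonneg fun k _ => hG.1 k))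

lemma sum_Iic_coeff_prod_pow_le [Fintype ι] {G : ι → MvPowerSeries σ ℝ}
    (hG : ∀ i k, 0 ≤ (G i).coeff k) {K : σ →₀ ℕ} {a : ℝ}
    (ha : ∀ i, ∑ n ∈ Iic K, (G i).coeff n ≤ a) (m : ι →₀ ℕ) :
    ∑ n ∈ Iic K, (∏ i, G i ^ m i).coeff n ≤ a ^ m.degree := by
  rw [prod_pow_eq_prod_sigma]
  calc _ ≤ ∏ p : Σ i, Fin (m i), ∑ n ∈ Iic K, (G p.1).coeff n :=
        sum_Iic_coeff_prod_le (fun p _ => hG p.1) K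
    _ ≤ ∏ _p : Σ i, Fin (m i), a :=
        Finset.prod_le_prod (fun p _ => Finset.sum_nonneg fun k _ => hG p.1 k) fun p _ => ha p.1
    _ = a ^ m.degree := by
        rw [Finset.prod_const, Finset.card_univ, card_sigma_fin_eq_degree]

end Majorants

section GevreyFunctions

variable {d N : ℕ} {β R : ℝ} {f : (Fin d → ℝ) → ℝ}

/-- Functions of finite Gevrey norm `‖f‖_{β,R}` on `ℝ^d`, not necessarily periodic. Boundedness of
the derivatives is required separately because `supNorm` of an unbounded function is `0`. -/
structure IsGevrey (β R : ℝ) (f : (Fin d → ℝ) → ℝ) : Prop where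
  contDiff : ContDiff ℝ (⊤ : ℕ∞) f
  bddAbove : ∀ k : Fin d → ℕ, BddAbove (Set.range fun x => |gevMDeriv k f x|)
  summable : Summable (gevreyTerm β R f)

lemma isGevrey_of_periodic2pi (hf : ContDiff ℝ (⊤ : ℕ∞) f) (hper : Periodic2pi f)
    (hsum : Summable (gevreyTerm β R f)) : IsGevrey β R f where
  contDiff := hf
  bddAbove k := bddAbove_range_abs_of_periodic2pi (periodic2pi_gevMDeriv hper k)
    (contDiff_gevMDeriv hf k).continuous
  summable := hsum

lemma supNorm_nonneg (f : (Fin d → ℝ) → ℝ) : 0 ≤ supNorm f :=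
  Real.iSup_nonneg fun _ => abs_nonneg _

lemma gevreyTerm_nonneg (β : ℝ) (hR : 0 ≤ R) (f : (Fin d → ℝ) → ℝ) (k : Fin d → ℕ) :
    0 ≤ gevreyTerm β R f k := by
  have := supNorm_nonneg (gevMDeriv k f)
  unfold gevreyTerm
  positivity

lemma gevreyTerm_zero (β R : ℝ) (f : (Fin d → ℝ) → ℝ) : gevreyTerm β R f 0 = supNorm f := by
  simp [gevreyTerm, gevMDeriv_zero]

lemma gevreyTerm_eq_gevreyWeight_mul (β : ℝ) (hR : 0 ≤ R) (f : (Fin d → ℝ) → ℝ)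
    (k : Fin d →₀ ℕ) : gevreyTerm β R f k =
      gevreyWeight β (R ^ β) k * (supNorm (gevMDeriv k f) / ∏ i, ((k i)! : ℝ)) := by
  have hpow : R ^ (β * ∑ i, (k i : ℝ)) = (R ^ β) ^ k.degree := by
    rw [Real.rpow_mul hR, ← Real.rpow_natCast, Finsupp.degree_eq_sum, Nat.cast_sum]
  have hfactorial : 0 < ∏ i, ((k i)! : ℝ) := by positivity
  rw [gevreyTerm, gevreyWeight, hpow, div_mul_div_comm, ← Real.rpow_add_one hfactorial.ne',
    sub_add_cancel, div_mul_eq_mul_div]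

lemma sum_gevreyTerm_le_gevreyNorm (hR : 0 ≤ R) (hsum : Summable (gevreyTerm β R f))
    (s : Finset (Fin d →₀ ℕ)) : ∑ k ∈ s, gevreyTerm β R f k ≤ gevreyNorm β R f := by
  have hs : Summable fun k : Fin d →₀ ℕ => gevreyTerm β R f k :=
    (Finsupp.equivFunOnFinite.summable_iff (f := gevreyTerm β R f)).2 hsum
  rw [gevreyNorm, ← Finsupp.equivFunOnFinite.tsum_eq]
  exact hs.sum_le_tsum s fun k _ => gevreyTerm_nonneg β hR f k

lemma summable_and_gevreyNorm_le_of_sum_Iic_le (hR : 0 ≤ R) {C : ℝ}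
    (hC : ∀ K : Fin d →₀ ℕ, ∑ k ∈ Iic K, gevreyTerm β R f k ≤ C) :
    Summable (gevreyTerm β R f) ∧ gevreyNorm β R f ≤ C := by
  have hsum (s : Finset (Fin d →₀ ℕ)) : ∑ k ∈ s, gevreyTerm β R f k ≤ C := by
    have hsubset : s ⊆ Iic (s.sup id) := fun k hk => mem_Iic.2 (Finset.le_sup (f := id) hk)
    exact (Finset.sum_le_sum_of_subset_of_nonneg hsubset
      fun k _ _ => gevreyTerm_nonneg β hR f k).trans (hC _)
  have hs : Summable fun k : Fin d →₀ ℕ => gevreyTerm β R f k :=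
    summable_of_sum_le (fun k => gevreyTerm_nonneg β hR f k) hsum
  refine ⟨(Finsupp.equivFunOnFinite.summable_iff (f := gevreyTerm β R f)).1 hs, ?_⟩
  rw [gevreyNorm, ← Finsupp.equivFunOnFinite.tsum_eq]
  exact hs.tsum_le_of_sum_le hsum

/-- The generating series of the terms of `‖f‖_{β,R} - ‖f‖_{C⁰}`. -/
noncomputable def gevreyTailSeries (β R : ℝ) (f : (Fin d → ℝ) → ℝ) : MvPowerSeries (Fin d) ℝ :=
  fun k => if k = 0 then 0 else gevreyTerm β R f k

lemma coeff_gevreyTailSeries (β R : ℝ) (f : (Fin d → ℝ) → ℝ) (k : Fin d →₀ ℕ) :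
    (gevreyTailSeries β R f).coeff k = if k = 0 then 0 else gevreyTerm β R f k := rfl

lemma coeff_gevreyTailSeries_nonneg (β : ℝ) (hR : 0 ≤ R) (f : (Fin d → ℝ) → ℝ) (k : Fin d →₀ ℕ) :
    0 ≤ (gevreyTailSeries β R f).coeff k := by
  rw [coeff_gevreyTailSeries]
  split_ifs
  exacts [le_rfl, gevreyTerm_nonneg β hR f k]

lemma sum_Iic_coeff_gevreyTailSeries_le (hR : 0 ≤ R) (hsum : Summable (gevreyTerm β R f))
    (K : Fin d →₀ ℕ) :
    ∑ k ∈ Iic K, (gevreyTailSeries β R f).coeff k ≤ gevreyNorm β R f - supNorm f := by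
  have hle := sum_gevreyTerm_le_gevreyNorm hR hsum (Iic K)
  have h0 : (0 : Fin d →₀ ℕ) ∈ Iic K := mem_Iic.2 zero_le
  rw [← Finset.add_sum_erase _ _ h0, Finsupp.coe_zero, gevreyTerm_zero] at hle
  rw [le_sub_iff_add_le', ← Finset.sum_erase (a := 0) _ (by simp [coeff_gevreyTailSeries])]
  refine (add_le_add_right (Finset.sum_le_sum fun k hk => ?_) _).trans hle
  rw [coeff_gevreyTailSeries, if_neg (Finset.ne_of_mem_erase hk)]

lemma abs_coeff_taylorSeries_le (x : Fin d → ℝ) {k : Fin d →₀ ℕ}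
    (hf : BddAbove (Set.range fun y => |gevMDeriv k f y|)) :
    |(taylorSeries x f).coeff k| ≤ supNorm (gevMDeriv k f) / ∏ i, ((k i)! : ℝ) := by
  rw [coeff_taylorSeries, abs_div, abs_of_pos (by positivity : 0 < ∏ i, ((k i)! : ℝ))]
  gcongr
  exact le_ciSup hf x

lemma gevreyWeight_mul_abs_coeff_taylorIncrement_le (hR : 0 ≤ R) (x : Fin d → ℝ) {k : Fin d →₀ ℕ}
    (hf : BddAbove (Set.range fun y => |gevMDeriv k f y|)) :
    gevreyWeight β (R ^ β) k * |(taylorIncrement x f).coeff k| ≤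
      (gevreyTailSeries β R f).coeff k := by
  rcases eq_or_ne k 0 with rfl | hk
  · simp [constantCoeff_taylorIncrement, coeff_gevreyTailSeries]
  · rw [coeff_taylorIncrement x f hk, coeff_gevreyTailSeries, if_neg hk,
      gevreyTerm_eq_gevreyWeight_mul β hR, ← coeff_taylorSeries]
    exact mul_le_mul_of_nonneg_left (abs_coeff_taylorSeries_le x hf)
      (gevreyWeight_nonneg β (by positivity) k)

lemma bddAbove_and_gevreyTerm_le (hR : 0 < R) {k : Fin d →₀ ℕ} {C : ℝ}
    (hC : ∀ x, gevreyWeight β (R ^ β) k * |(taylorSeries x f).coeff k| ≤ C) :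
    BddAbove (Set.range fun x => |gevMDeriv k f x|) ∧ gevreyTerm β R f k ≤ C := by
  have hweight : 0 < gevreyWeight β (R ^ β) k := by
    unfold gevreyWeight
    positivity
  have hfactorial : 0 < ∏ i, ((k i)! : ℝ) := by positivity
  have hbound x : |gevMDeriv k f x| ≤ C / gevreyWeight β (R ^ β) k * ∏ i, ((k i)! : ℝ) := by
    have hx := hC x
    rwa [coeff_taylorSeries, abs_div, abs_of_pos hfactorial, ← le_div_iff₀' hweight,
      div_le_iff₀ hfactorial] at hx
  refine ⟨⟨_, Set.forall_mem_range.2 hbound⟩, ?_⟩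
  rw [gevreyTerm_eq_gevreyWeight_mul β hR.le, ← le_div_iff₀' hweight, div_le_iff₀ hfactorial]
  exact ciSup_le hbound

end GevreyFunctions

section Composition

variable {d N : ℕ} {β R R₁ : ℝ} {Y : (Fin N → ℝ) → ℝ} {u : Fin N → (Fin d → ℝ) → ℝ}

/-- A bound, uniform in the base point, for the contribution of `∂ᵐY` in Faà di Bruno's formula to
the `n`-th term of `‖Y ∘ u‖_{β,R₁}`. -/
noncomputable def faaDiBrunoMajorant (β R₁ : ℝ) (Y : (Fin N → ℝ) → ℝ)
    (u : Fin N → (Fin d → ℝ) → ℝ) (m : Fin N →₀ ℕ) (n : Fin d →₀ ℕ) : ℝ :=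
  supNorm (gevMDeriv m Y) / (∏ i, ((m i)! : ℝ)) *
    (gevreyWeight β ((d : ℝ) ^ (β - 1)) m * (∏ i, gevreyTailSeries β R₁ (u i) ^ m i).coeff n)

lemma gevreyWeight_mul_abs_coeff_taylorSeries_comp_le (hβ : 1 ≤ β) (hR₁ : 0 ≤ R₁)
    (hY : IsGevrey β R Y) (hu : ∀ i, IsGevrey β R₁ (u i)) (x : Fin d → ℝ) {M : ℕ}
    {n : Fin d →₀ ℕ} (hn : n.degree < M) :
    gevreyWeight β (R₁ ^ β) n * |(taylorSeries x fun y => Y fun i => u i y).coeff n| ≤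
      ∑ m ∈ (Finsupp.finite_of_degree_lt M).toFinset,
        faaDiBrunoMajorant β R₁ Y u m n := by
  have hweight := gevreyWeight_nonneg β (Real.rpow_nonneg hR₁ β) n
  rw [coeff_taylorSeries_comp x hY.contDiff (fun i => (hu i).contDiff) hn]
  refine (mul_le_mul_of_nonneg_left (Finset.abs_sum_le_sum_abs _ _) hweight).trans ?_
  rw [Finset.mul_sum]
  refine Finset.sum_le_sum fun m _ => ?_
  have hprod := gevreyWeight_mul_abs_coeff_prod_pow_le hβ (Real.rpow_nonneg hR₁ β)
    (fun i => constantCoeff_taylorIncrement x (u i))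
    (fun i k => gevreyWeight_mul_abs_coeff_taylorIncrement_le hR₁ x ((hu i).bddAbove k)) m n
  rw [Fintype.card_fin] at hprod
  rw [abs_mul, mul_left_comm, faaDiBrunoMajorant]
  exact mul_le_mul (abs_coeff_taylorSeries_le _ (hY.bddAbove m)) hprod
    (mul_nonneg hweight (abs_nonneg _)) (div_nonneg (supNorm_nonneg _) (by positivity))

lemma sum_Iic_faaDiBrunoMajorant_le (hR : 0 ≤ R) (hR₁ : 0 ≤ R₁) (hd : 1 ≤ d)
    (hu : ∀ i, Summable (gevreyTerm β R₁ (u i)))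
    (hsmall : ∀ i, gevreyNorm β R₁ (u i) - supNorm (u i) ≤ R ^ β / (d : ℝ) ^ (β - 1))
    (K : Fin d →₀ ℕ) (m : Fin N →₀ ℕ) :
    ∑ n ∈ Iic K, faaDiBrunoMajorant β R₁ Y u m n ≤ gevreyTerm β R Y m := by
  have hd' : (0 : ℝ) < (d : ℝ) ^ (β - 1) := Real.rpow_pos_of_pos (by exact_mod_cast hd) _
  have htail := sum_Iic_coeff_prod_pow_le (fun i => coeff_gevreyTailSeries_nonneg β hR₁ (u i))
    (fun i => (sum_Iic_coeff_gevreyTailSeries_le hR₁ (hu i) K).trans (hsmall i)) m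
  simp only [faaDiBrunoMajorant]
  rw [← Finset.mul_sum, ← Finset.mul_sum, gevreyTerm_eq_gevreyWeight_mul β hR, mul_comm]
  refine mul_le_mul_of_nonneg_right ?_ (div_nonneg (supNorm_nonneg _) (by positivity))
  calc _ ≤ gevreyWeight β ((d : ℝ) ^ (β - 1)) m * (R ^ β / (d : ℝ) ^ (β - 1)) ^ m.degree :=
        mul_le_mul_of_nonneg_left htail (gevreyWeight_nonneg β hd'.le m)
    _ = gevreyWeight β (R ^ β) m := by
        rw [gevreyWeight_mul_pow, mul_div_cancel₀ _ hd'.ne']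

lemma bddAbove_and_gevreyTerm_comp_le (hβ : 1 ≤ β) (hR₁ : 0 < R₁) (hY : IsGevrey β R Y)
    (hu : ∀ i, IsGevrey β R₁ (u i)) {M : ℕ} {n : Fin d →₀ ℕ} (hn : n.degree < M) :
    BddAbove (Set.range fun x => |gevMDeriv n (fun y => Y fun i => u i y) x|) ∧
      gevreyTerm β R₁ (fun y => Y fun i => u i y) n ≤
        ∑ m ∈ (Finsupp.finite_of_degree_lt M).toFinset,
          faaDiBrunoMajorant β R₁ Y u m n :=
  bddAbove_and_gevreyTerm_le hR₁ fun x =>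
    gevreyWeight_mul_abs_coeff_taylorSeries_comp_le hβ hR₁.le hY hu x hn

lemma sum_Iic_gevreyTerm_comp_le (hβ : 1 ≤ β) (hR : 0 ≤ R) (hR₁ : 0 < R₁) (hd : 1 ≤ d)
    (hY : IsGevrey β R Y) (hu : ∀ i, IsGevrey β R₁ (u i))
    (hsmall : ∀ i, gevreyNorm β R₁ (u i) - supNorm (u i) ≤ R ^ β / (d : ℝ) ^ (β - 1))
    (K : Fin d →₀ ℕ) :
    ∑ n ∈ Iic K, gevreyTerm β R₁ (fun x => Y fun i => u i x) n ≤ gevreyNorm β R Y := by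
  have hterm (n) (hn : n ∈ Iic K) := (bddAbove_and_gevreyTerm_comp_le hβ hR₁ hY hu
    (Nat.lt_succ_of_le (Finsupp.degree_mono (mem_Iic.1 hn)))).2
  calc _ ≤ ∑ n ∈ Iic K, ∑ m ∈ (Finsupp.finite_of_degree_lt (K.degree + 1)).toFinset,
          faaDiBrunoMajorant β R₁ Y u m n := Finset.sum_le_sum hterm
    _ = ∑ m ∈ (Finsupp.finite_of_degree_lt (K.degree + 1)).toFinset, ∑ n ∈ Iic K,
          faaDiBrunoMajorant β R₁ Y u m n := Finset.sum_comm
    _ ≤ ∑ m ∈ (Finsupp.finite_of_degree_lt (K.degree + 1)).toFinset, gevreyTerm β R Y m :=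
      Finset.sum_le_sum fun m _ => sum_Iic_faaDiBrunoMajorant_le hR hR₁.le hd
        (fun i => (hu i).summable) hsmall K m
    _ ≤ gevreyNorm β R Y := sum_gevreyTerm_le_gevreyNorm hR hY.summable _

end Composition

end Gevrey

open Gevrey in
theorem gevrey_composition_general {β R R₁ : ℝ} (hβ : 1 ≤ β) (hR : 0 < R) (hR₁ : 0 < R₁)
    {N d : ℕ} (hd : 1 ≤ d) {Y : (Fin N → ℝ) → ℝ} (hY : IsGevrey β R Y)
    {u : Fin N → (Fin d → ℝ) → ℝ} (hu : ∀ i, IsGevrey β R₁ (u i))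
    (hsmall : ∀ i, gevreyNorm β R₁ (u i) - supNorm (u i) ≤ R ^ β / (d : ℝ) ^ (β - 1)) :
    IsGevrey β R₁ (fun x => Y fun i => u i x) ∧
      gevreyNorm β R₁ (fun x => Y fun i => u i x) ≤ gevreyNorm β R Y := by
  obtain ⟨hsummable, hnorm⟩ := summable_and_gevreyNorm_le_of_sum_Iic_le hR₁.le
    (sum_Iic_gevreyTerm_comp_le hβ hR.le hR₁ hd hY hu hsmall)
  refine ⟨⟨hY.contDiff.comp (contDiff_pi.2 fun i => (hu i).contDiff), fun k => ?_, hsummable⟩,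
    hnorm⟩
  exact (bddAbove_and_gevreyTerm_comp_le hβ hR₁ hY hu (n := Finsupp.equivFunOnFinite.symm k)
    (Nat.lt_succ_self _)).1

/-- Composition lemma of Marco–Sauzin: if
`‖u_i‖_{β,R₁} - ‖u_i‖_{C⁰} ≤ R^β/d^{β-1}` for each `i`, then
`Y∘u` is smooth, `(2π)ℤ^d`-periodic and `‖Y∘u‖_{β,R₁} ≤ ‖Y‖_{β,R}`. -/
theorem gevrey_composition (β R R₁ : ℝ) (hβ : 1 ≤ β) (hR : 0 < R)
    (hR₁ : 0 < R₁) (N d : ℕ) (hN : 1 ≤ N) (hd : 1 ≤ d)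
    (Y : (Fin N → ℝ) → ℝ) (hY : ContDiff ℝ (⊤ : ℕ∞) Y) (hYper : Periodic2pi Y)
    (hYsum : Summable (gevreyTerm β R Y))
    (u : Fin N → (Fin d → ℝ) → ℝ)
    (hu : ∀ i, ContDiff ℝ (⊤ : ℕ∞) (u i)) (huper : ∀ i, Periodic2pi (u i))
    (husum : ∀ i, Summable (gevreyTerm β R₁ (u i)))
    (hsmall : ∀ i, gevreyNorm β R₁ (u i) - supNorm (u i) ≤
      R ^ β / (d : ℝ) ^ (β - 1)) :
    ContDiff ℝ (⊤ : ℕ∞) (fun x : Fin d → ℝ => Y (fun i => u i x)) ∧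
    Periodic2pi (fun x : Fin d → ℝ => Y (fun i => u i x)) ∧
    Summable (gevreyTerm β R₁ (fun x : Fin d → ℝ => Y (fun i => u i x))) ∧
    gevreyNorm β R₁ (fun x : Fin d → ℝ => Y (fun i => u i x)) ≤
      gevreyNorm β R Y := by
  obtain ⟨hcomp, hnorm⟩ := gevrey_composition_general hβ hR hR₁ hd
    (Gevrey.isGevrey_of_periodic2pi hY hYper hYsum)
    (fun i => Gevrey.isGevrey_of_periodic2pi (hu i) (huper i) (husum i)) hsmall
  exact ⟨hcomp.contDiff, Gevrey.periodic2pi_comp Y huper, hcomp.summable, hnorm⟩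
end
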